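/- Let d ≤ 3 and let V ⊂ ℝ^d be a bounded open set that is star-shaped with respect to every point of a ball B ⊂ V. Let θ ≥ diam(V)/diam(B). Then there exists a constant C, depending only on d and θ, such that for every φ ∈ H²(V) ∩ C(V̄) there is an affine function L : ℝ^d → ℝ with sup_{x ∈ V̄} |φ(x) − L(x)| ≤ C · diam(V)² · |V|^{-1/2} · ‖φ‖_{H²(V)} and ‖∇L − ∇φ‖_{L²(V)^d} ≤ C · diam(V) · ‖φ‖_{H²(V)}. -/

import Mathlib

open Metric MeasureTheory

/-- The `H²(V)` norm of `φ` (square-integrable derivatives up to order 2). -/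
noncomputable def H2norm {d : ℕ} (V : Set (EuclideanSpace ℝ (Fin d)))
    (φ : EuclideanSpace ℝ (Fin d) → ℝ) : ℝ :=
  (∫ x in V, ((φ x) ^ 2 + ‖fderiv ℝ φ x‖ ^ 2 + ‖iteratedFDeriv ℝ 2 φ x‖ ^ 2)) ^ ((1 : ℝ) / 2)

/-!
The affine map is the average, over `y` in the ball, of the first-order Taylor polynomials of `φ`
at `y`. By the integral form of the remainder, the error at `x` is at most `diam V ^ 2` times the
average over `y` of `∫₀¹ (1 - s) |D²φ((1 - s) y + s x)| ds`. Jensen's inequality in `y` followed by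
the dilation `u = (1 - s) y + s x`, which stays in `V` by star-shapedness, bounds the `y`-average at
time `s` by `(1 - s) ^ (-d / p) |B| ^ (-1 / p) ‖D²φ‖_{L^p(V)}`, and the weight `1 - s` makes this
integrable in `s` exactly when `d < 2 p`. For the gradient there is no weight, but `x` is also
integrated over `V`: one may then dilate in `y` if `s ≤ 1 / 2` and in `x` if `s ≥ 1 / 2`, so that
the Jacobian never exceeds `2 ^ d`.
-/

open AffineMap Module ProbabilityTheory Set
open scoped ENNReal NNReal

section Lintegral

lemma rpow_lintegral_le_lintegral_rpow {α : Type*} [MeasurableSpace α] {μ : Measure α}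
    [IsZeroOrProbabilityMeasure μ] {p : ℝ} (hp : 1 ≤ p) {f : α → ℝ≥0∞} (hf : AEMeasurable f μ) :
    (∫⁻ a, f a ∂μ) ^ p ≤ ∫⁻ a, f a ^ p ∂μ := by
  have hp0 : 0 < p := by linarith
  have hLp : eLpNorm' f 1 μ ≤ eLpNorm' f p μ := by
    refine (eLpNorm'_le_eLpNorm'_mul_rpow_measure_univ one_pos hp hf.aestronglyMeasurable).trans ?_
    refine mul_le_of_le_one_right' (ENNReal.rpow_le_one prob_le_one ?_)
    simpa using inv_le_one_of_one_le₀ hp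
  calc (∫⁻ a, f a ∂μ) ^ p = eLpNorm' f 1 μ ^ p := by simp [eLpNorm']
    _ ≤ eLpNorm' f p μ ^ p := by gcongr
    _ = ∫⁻ a, f a ^ p ∂μ := by simp [← lintegral_rpow_enorm_eq_rpow_eLpNorm' hp0]

lemma lintegral_Ioo_one_sub_rpow {α : ℝ} (hα : -1 < α) :
    ∫⁻ s in Ioo (0 : ℝ) 1, ENNReal.ofReal ((1 - s) ^ α) = ENNReal.ofReal (α + 1)⁻¹ := by
  have hint : IntervalIntegrable (fun s : ℝ ↦ (1 - s) ^ α) volume 0 1 := by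
    simpa using (intervalIntegral.intervalIntegrable_rpow' (a := 1) (b := 0) hα).comp_sub_left 1
  rw [setLIntegral_congr Ioo_ae_eq_Ioc, ← ofReal_integral_eq_lintegral_ofReal hint.1,
    ← intervalIntegral.integral_of_le zero_le_one,
    intervalIntegral.integral_comp_sub_left (fun s : ℝ ↦ s ^ α) 1, integral_rpow (.inl hα)]
  · simp [Real.zero_rpow (by linarith : α + 1 ≠ 0)]
  · filter_upwards [ae_restrict_mem measurableSet_Ioc] with s hs
    exact Real.rpow_nonneg (by linarith [hs.2]) _

variable {E : Type*} [NormedAddCommGroup E] [NormedSpace ℝ E] [FiniteDimensional ℝ E]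
  [MeasurableSpace E] [BorelSpace E] (μ : Measure E) [μ.IsAddHaarMeasure]

lemma map_lineMap_addHaar (x : E) {c : ℝ} (hc : 0 < c) :
    μ.map (fun y ↦ lineMap x y c) = ENNReal.ofReal (c ^ finrank ℝ E)⁻¹ • μ := by
  have hcomp : (fun y ↦ lineMap x y c) = (· + x) ∘ (c • ·) ∘ (· - x) := by
    ext y; simp [lineMap_apply]
  rw [hcomp, ← Measure.map_map (by fun_prop) (by fun_prop),
    ← Measure.map_map (by fun_prop) (by fun_prop), map_sub_right_eq_self,
    Measure.map_addHaar_smul μ hc.ne', Measure.map_smul, map_add_right_eq_self,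
    abs_of_pos (by positivity)]

lemma setLIntegral_comp_lineMap_le {g : E → ℝ≥0∞} (hg : Measurable g) {A V : Set E}
    (hV : MeasurableSet V) {x : E} {c : ℝ} (hc : 0 < c) (hAV : MapsTo (fun y ↦ lineMap x y c) A V) :
    ∫⁻ y in A, g (lineMap x y c) ∂μ ≤
      ENNReal.ofReal (c ^ finrank ℝ E)⁻¹ * ∫⁻ u in V, g u ∂μ := by
  calc ∫⁻ y in A, g (lineMap x y c) ∂μ
      ≤ ∫⁻ y in (fun y ↦ lineMap x y c) ⁻¹' V, g (lineMap x y c) ∂μ := lintegral_mono_set hAV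
    _ = ∫⁻ u in V, g u ∂μ.map (fun y ↦ lineMap x y c) :=
        (setLIntegral_map hV hg (by fun_prop)).symm
    _ = ENNReal.ofReal (c ^ finrank ℝ E)⁻¹ * ∫⁻ u in V, g u ∂μ := by
        rw [map_lineMap_addHaar μ x hc, Measure.restrict_smul, lintegral_smul_measure, smul_eq_mul]

end Lintegral

section StarConvex

lemma lineMap_mem_of_starConvex {E : Type*} [AddCommGroup E] [Module ℝ E] {V : Set E} {x y : E}
    (hy : StarConvex ℝ y V) (hx : x ∈ V) {s : ℝ} (hs : s ∈ Icc (0 : ℝ) 1) :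
    lineMap y x s ∈ V := by
  rw [lineMap_apply_module]
  exact hy hx (by linarith [hs.2]) hs.1 (by ring)

lemma ofReal_inv_pow_le_two_pow {c : ℝ} (hc : 1 / 2 ≤ c) (n : ℕ) :
    ENNReal.ofReal (c ^ n)⁻¹ ≤ 2 ^ n := by
  have hinv : c⁻¹ ≤ 2 := inv_le_of_inv_le₀ two_pos (by linarith)
  rw [← inv_pow, ENNReal.ofReal_pow (by positivity)]
  gcongr
  simpa using ENNReal.ofReal_le_ofReal hinv

lemma two_sub_div_pos {n : ℕ} {p : ℝ≥0} (hp : 1 ≤ p) (hn : n < 2 * p) : 0 < 2 - n / (p : ℝ) :=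
  sub_pos.2 <| (div_lt_iff₀ (zero_lt_one.trans_le (mod_cast hp))).2 (mod_cast hn)

variable {E : Type*} [NormedAddCommGroup E] [NormedSpace ℝ E] [FiniteDimensional ℝ E]
  [MeasurableSpace E] [BorelSpace E] {μ : Measure E} [μ.IsAddHaarMeasure] {B V : Set E}
  {g : E → ℝ≥0∞} {x : E} {s : ℝ} {p : ℝ≥0}

lemma lintegral_cond_comp_lineMap_le (hV : MeasurableSet V) (hstar : ∀ y ∈ B, StarConvex ℝ y V)
    (hg : Measurable g) (hx : x ∈ V) (hs : s ∈ Ico (0 : ℝ) 1) :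
    ∫⁻ y, g (lineMap y x s) ∂μ[|B] ≤
      ENNReal.ofReal ((1 - s) ^ finrank ℝ E)⁻¹ * ((μ B)⁻¹ * ∫⁻ u in V, g u ∂μ) := by
  have hmaps : MapsTo (fun y ↦ lineMap x y (1 - s)) B V := fun y hy ↦ by
    simp only [lineMap_apply_one_sub]
    exact lineMap_mem_of_starConvex (hstar y hy) hx ⟨hs.1, hs.2.le⟩
  have hset := setLIntegral_comp_lineMap_le μ hg hV (sub_pos.2 hs.2) hmaps
  simp only [lineMap_apply_one_sub] at hset
  rw [ProbabilityTheory.cond, lintegral_smul_measure, smul_eq_mul, mul_left_comm]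
  gcongr

lemma lintegral_cond_comp_lineMap_le_Lp (hV : MeasurableSet V)
    (hstar : ∀ y ∈ B, StarConvex ℝ y V) (hp : 1 ≤ p) (hg : Measurable g) (hx : x ∈ V)
    (hs : s ∈ Ico (0 : ℝ) 1) :
    ∫⁻ y, g (lineMap y x s) ∂μ[|B] ≤
      ENNReal.ofReal ((1 - s) ^ (-(finrank ℝ E / p : ℝ))) *
        ((μ B)⁻¹ ^ (1 / p : ℝ) * eLpNorm g p (μ.restrict V)) := by
  have hp0 : 0 < (p : ℝ) := zero_lt_one.trans_le (by exact_mod_cast hp)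
  have h1s : 0 < 1 - s := sub_pos.2 hs.2
  have hpow : (∫⁻ y, g (lineMap y x s) ∂μ[|B]) ^ (p : ℝ) ≤
      ENNReal.ofReal ((1 - s) ^ finrank ℝ E)⁻¹ * ((μ B)⁻¹ * ∫⁻ u in V, g u ^ (p : ℝ) ∂μ) :=
    (rpow_lintegral_le_lintegral_rpow (by exact_mod_cast hp) (by fun_prop)).trans
      (lintegral_cond_comp_lineMap_le hV hstar (hg.pow_const _) hx hs)
  have hconst : (1 - s) ^ (-(finrank ℝ E / p : ℝ)) = ((1 - s) ^ finrank ℝ E)⁻¹ ^ (1 / p : ℝ) := by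
    rw [← Real.rpow_natCast, ← Real.rpow_neg h1s.le, ← Real.rpow_mul h1s.le]
    ring_nf
  rw [hconst, eLpNorm_nnreal_eq_lintegral (by exact_mod_cast hp0.ne'),
    ← ENNReal.mul_rpow_of_nonneg _ _ (by positivity),
    ← ENNReal.ofReal_rpow_of_nonneg (by positivity) (by positivity),
    ← ENNReal.mul_rpow_of_nonneg _ _ (by positivity), one_div, ENNReal.le_rpow_inv_iff hp0]
  exact hpow

lemma lintegral_cond_lintegral_one_sub_mul_comp_lineMap_le (hV : MeasurableSet V)
    (hstar : ∀ y ∈ B, StarConvex ℝ y V) (hp : 1 ≤ p) (hdim : finrank ℝ E < 2 * p)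
    (hg : Measurable g) (hx : x ∈ V) :
    ∫⁻ y, (∫⁻ s in Ioo (0 : ℝ) 1, ENNReal.ofReal (1 - s) * g (lineMap y x s)) ∂μ[|B] ≤
      ENNReal.ofReal (2 - finrank ℝ E / p)⁻¹ *
        ((μ B)⁻¹ ^ (1 / p : ℝ) * eLpNorm g p (μ.restrict V)) := by
  have hexp : -1 < 1 - finrank ℝ E / (p : ℝ) := by linarith [two_sub_div_pos hp hdim]
  set c := (μ B)⁻¹ ^ (1 / p : ℝ) * eLpNorm g p (μ.restrict V)
  calc ∫⁻ y, (∫⁻ s in Ioo (0 : ℝ) 1, ENNReal.ofReal (1 - s) * g (lineMap y x s)) ∂μ[|B]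
      = ∫⁻ s in Ioo (0 : ℝ) 1, ENNReal.ofReal (1 - s) * ∫⁻ y, g (lineMap y x s) ∂μ[|B] := by
        rw [lintegral_lintegral_swap (by fun_prop)]
        exact lintegral_congr fun s ↦ lintegral_const_mul _ (by fun_prop)
    _ ≤ ∫⁻ s in Ioo (0 : ℝ) 1, ENNReal.ofReal ((1 - s) ^ (1 - finrank ℝ E / (p : ℝ))) * c := by
        refine setLIntegral_mono' measurableSet_Ioo fun s hs ↦ ?_
        have h1s : 0 < 1 - s := sub_pos.2 hs.2
        rw [sub_eq_add_neg 1 (_ / _), Real.rpow_add h1s, Real.rpow_one, ENNReal.ofReal_mul h1s.le,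
          mul_assoc]
        gcongr
        exact lintegral_cond_comp_lineMap_le_Lp hV hstar hp hg hx ⟨hs.1.le, hs.2⟩
    _ = ENNReal.ofReal (2 - finrank ℝ E / p)⁻¹ * c := by
        rw [lintegral_mul_const _ (by fun_prop), lintegral_Ioo_one_sub_rpow hexp]
        ring_nf

lemma setLIntegral_lintegral_cond_comp_lineMap_le (hB : MeasurableSet B) (hV : MeasurableSet V)
    (hBV : B ⊆ V) (hstar : ∀ y ∈ B, StarConvex ℝ y V) (hg : Measurable g)
    (hs : s ∈ Ioo (0 : ℝ) 1) :
    ∫⁻ x in V, ∫⁻ y, g (lineMap y x s) ∂μ[|B] ∂μ ≤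
      2 ^ finrank ℝ E * ((μ B)⁻¹ * μ V) * ∫⁻ u in V, g u ∂μ := by
  rcases le_total s (1 / 2) with h | h
  · calc ∫⁻ x in V, ∫⁻ y, g (lineMap y x s) ∂μ[|B] ∂μ
        ≤ ∫⁻ _ in V, 2 ^ finrank ℝ E * ((μ B)⁻¹ * ∫⁻ u in V, g u ∂μ) ∂μ := by
          refine setLIntegral_mono' hV fun x hx ↦ ?_
          refine (lintegral_cond_comp_lineMap_le hV hstar hg hx ⟨hs.1.le, hs.2⟩).trans ?_
          gcongr
          exact ofReal_inv_pow_le_two_pow (by linarith) _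
      _ = 2 ^ finrank ℝ E * ((μ B)⁻¹ * μ V) * ∫⁻ u in V, g u ∂μ := by
          rw [setLIntegral_const]; ring
  · calc ∫⁻ x in V, ∫⁻ y, g (lineMap y x s) ∂μ[|B] ∂μ
        = ∫⁻ y, ∫⁻ x in V, g (lineMap y x s) ∂μ ∂μ[|B] := lintegral_lintegral_swap (by fun_prop)
      _ ≤ ∫⁻ _, 2 ^ finrank ℝ E * ∫⁻ u in V, g u ∂μ ∂μ[|B] := by
          refine lintegral_mono_ae ?_
          filter_upwards [ae_cond_mem hB] with y hy
          refine (setLIntegral_comp_lineMap_le μ hg hV hs.1 fun x hx ↦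
            lineMap_mem_of_starConvex (hstar y hy) hx ⟨hs.1.le, hs.2.le⟩).trans ?_
          gcongr
          exact ofReal_inv_pow_le_two_pow h _
      _ = 2 ^ finrank ℝ E * ((μ B)⁻¹ * μ B) * ∫⁻ u in V, g u ∂μ := by
          rw [lintegral_const, cond_apply hB, inter_univ]; ring
      _ ≤ 2 ^ finrank ℝ E * ((μ B)⁻¹ * μ V) * ∫⁻ u in V, g u ∂μ := by gcongr

lemma eLpNorm_lintegral_cond_lintegral_comp_lineMap_le (hB : MeasurableSet B)
    (hV : MeasurableSet V) (hBV : B ⊆ V) (hstar : ∀ y ∈ B, StarConvex ℝ y V) (hp : 1 ≤ p)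
    (hg : Measurable g) :
    eLpNorm (fun x ↦ ∫⁻ y, (∫⁻ s in Ioo (0 : ℝ) 1, g (lineMap y x s)) ∂μ[|B]) p (μ.restrict V) ≤
      (2 ^ finrank ℝ E * ((μ B)⁻¹ * μ V)) ^ (1 / p : ℝ) * eLpNorm g p (μ.restrict V) := by
  have hp1 : 1 ≤ (p : ℝ) := by exact_mod_cast hp
  have hp0 : p ≠ 0 := (zero_lt_one.trans_le hp).ne'
  have hunit : IsProbabilityMeasure (volume.restrict (Ioo (0 : ℝ) 1)) := ⟨by simp⟩
  rw [eLpNorm_nnreal_eq_lintegral hp0, eLpNorm_nnreal_eq_lintegral hp0,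
    ← ENNReal.mul_rpow_of_nonneg _ _ (by positivity)]
  gcongr
  calc ∫⁻ x in V, (∫⁻ y, (∫⁻ s in Ioo (0 : ℝ) 1, g (lineMap y x s)) ∂μ[|B]) ^ (p : ℝ) ∂μ
      ≤ ∫⁻ x in V, ∫⁻ y, (∫⁻ s in Ioo (0 : ℝ) 1, g (lineMap y x s) ^ (p : ℝ)) ∂μ[|B] ∂μ := by
        refine lintegral_mono fun x ↦ (rpow_lintegral_le_lintegral_rpow hp1 ?_).trans <|
          lintegral_mono fun y ↦ rpow_lintegral_le_lintegral_rpow hp1 (by fun_prop)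
        fun_prop
    _ = ∫⁻ s in Ioo (0 : ℝ) 1, ∫⁻ x in V, ∫⁻ y, g (lineMap y x s) ^ (p : ℝ) ∂μ[|B] ∂μ := by
        rw [lintegral_congr fun x ↦ lintegral_lintegral_swap (?_ : AEMeasurable _ _)]
        · exact lintegral_lintegral_swap (by fun_prop)
        · fun_prop
    _ ≤ ∫⁻ _ in Ioo (0 : ℝ) 1,
          2 ^ finrank ℝ E * ((μ B)⁻¹ * μ V) * ∫⁻ u in V, g u ^ (p : ℝ) ∂μ :=
        setLIntegral_mono' measurableSet_Ioo fun s hs ↦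
          setLIntegral_lintegral_cond_comp_lineMap_le hB hV hBV hstar (hg.pow_const _) hs
    _ = 2 ^ finrank ℝ E * ((μ B)⁻¹ * μ V) * ∫⁻ u in V, g u ^ (p : ℝ) ∂μ := by simp

end StarConvex

section Taylor

variable {E F : Type*} [NormedAddCommGroup E] [NormedSpace ℝ E] [NormedAddCommGroup F]
  [NormedSpace ℝ F] [CompleteSpace F]

lemma enorm_sub_sum_iteratedFDeriv_le {n : ℕ} {f : E → F} (hf : ContDiff ℝ (n + 1) f)
    (x y : E) :
    ‖f x - ∑ k ∈ .range (n + 1), (k.factorial : ℝ)⁻¹ • iteratedFDeriv ℝ k f y fun _ ↦ x - y‖ₑ ≤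
      ‖(n.factorial : ℝ)⁻¹‖ₑ * (‖x - y‖ₑ ^ (n + 1) * ∫⁻ s in Ioo (0 : ℝ) 1,
        ENNReal.ofReal (1 - s) ^ n * ‖iteratedFDeriv ℝ (n + 1) f (lineMap y x s)‖ₑ) := by
  have htaylor := map_add_eq_sum_add_integral_iteratedFDeriv (f := f) (x := y) (y := x - y) (n := n)
    fun _ _ ↦ hf.contDiffAt
  rw [add_sub_cancel, ← sub_eq_iff_eq_add', intervalIntegral.integral_of_le zero_le_one,
    setIntegral_congr_set Ioo_ae_eq_Ioc.symm] at htaylor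
  rw [htaylor, enorm_smul, ← lintegral_const_mul' _ _ (by finiteness)]
  gcongr
  refine (enorm_integral_le_lintegral_enorm _).trans (setLIntegral_mono' measurableSet_Ioo ?_)
  intro s hs
  have hop : ‖iteratedFDeriv ℝ (n + 1) f (lineMap y x s) fun _ ↦ x - y‖ₑ ≤
      ‖iteratedFDeriv ℝ (n + 1) f (lineMap y x s)‖ₑ * ‖x - y‖ₑ ^ (n + 1) := by
    simpa [enorm] using ENNReal.coe_le_coe.2 <|
      (iteratedFDeriv ℝ (n + 1) f (lineMap y x s)).le_opNNNorm fun _ ↦ x - y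
  rw [enorm_smul, enorm_pow, Real.enorm_of_nonneg (sub_nonneg.2 hs.2.le), mul_left_comm,
    mul_comm (‖x - y‖ₑ ^ _), add_comm y, ← lineMap_apply_module']
  gcongr

lemma enorm_sub_add_fderiv_le {f : E → F} (hf : ContDiff ℝ 2 f) (x y : E) :
    ‖f x - (f y + fderiv ℝ f y (x - y))‖ₑ ≤ ‖x - y‖ₑ ^ 2 *
      ∫⁻ s in Ioo (0 : ℝ) 1, ENNReal.ofReal (1 - s) * ‖iteratedFDeriv ℝ 2 f (lineMap y x s)‖ₑ := by
  simpa [Finset.sum_range_succ, -map_sub] using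
    enorm_sub_sum_iteratedFDeriv_le (n := 1) (mod_cast hf) x y

lemma enorm_fderiv_sub_fderiv_le {f : E → F} (hf : ContDiff ℝ 2 f) (x y : E) :
    ‖fderiv ℝ f x - fderiv ℝ f y‖ₑ ≤
      ‖x - y‖ₑ * ∫⁻ s in Ioo (0 : ℝ) 1, ‖iteratedFDeriv ℝ 2 f (lineMap y x s)‖ₑ := by
  have hnorm (u : E) : ‖iteratedFDeriv ℝ 1 (fderiv ℝ f) u‖ₑ = ‖iteratedFDeriv ℝ 2 f u‖ₑ :=
    enorm_eq_iff_norm_eq.2 norm_iteratedFDeriv_fderiv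
  have hf' : ContDiff ℝ 1 (fderiv ℝ f) := hf.fderiv_right (by norm_num)
  simp only [← hnorm]
  simpa using enorm_sub_sum_iteratedFDeriv_le (n := 0) (mod_cast hf') x y

end Taylor

section AveragedTaylor

variable {E F : Type*} [NormedAddCommGroup E] [NormedSpace ℝ E] [MeasurableSpace E]
  [NormedAddCommGroup F] [NormedSpace ℝ F]

/-- The average over `y`, with respect to `ν`, of the first-order Taylor polynomials
`x ↦ φ y + Dφ(y) (x - y)`, regrouped so as to be visibly affine in `x`. -/
noncomputable def averagedTaylor (ν : Measure E) (φ : E → F) : E →ᴬ[ℝ] F :=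
  (∫ y, fderiv ℝ φ y ∂ν).toContinuousAffineMap +
    ContinuousAffineMap.const ℝ E (∫ y, (φ y - fderiv ℝ φ y y) ∂ν)

variable [CompleteSpace F] {ν : Measure E} [IsProbabilityMeasure ν] {φ : E → F}

lemma fderiv_sub_averagedTaylor (hφ' : Integrable (fderiv ℝ φ) ν) (x : E) :
    fderiv ℝ φ x - (averagedTaylor ν φ).contLinear = ∫ y, (fderiv ℝ φ x - fderiv ℝ φ y) ∂ν := by
  rw [integral_sub (by fun_prop) hφ']
  simp [averagedTaylor]

lemma sub_averagedTaylor (hφ : Integrable φ ν)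
    (hφ' : Integrable (fderiv ℝ φ) ν) (hφid : Integrable (fun y ↦ fderiv ℝ φ y y) ν) (x : E) :
    φ x - averagedTaylor ν φ x = ∫ y, (φ x - (φ y + fderiv ℝ φ y (x - y))) ∂ν := by
  have hφx : Integrable (fun y ↦ fderiv ℝ φ y x) ν := hφ'.apply_continuousLinearMap x
  have hφsub : Integrable (fun y ↦ fderiv ℝ φ y (x - y)) ν := by
    simpa only [map_sub] using Integrable.sub' hφx hφid
  rw [integral_sub (by fun_prop) (by fun_prop), integral_add hφ hφsub]
  have hL : averagedTaylor ν φ x =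
      (∫ y, fderiv ℝ φ y x ∂ν) + ((∫ y, φ y ∂ν) - ∫ y, fderiv ℝ φ y y ∂ν) := by
    simp [averagedTaylor, ContinuousLinearMap.integral_apply hφ', integral_sub hφ hφid]
  have hsub : ∫ y, fderiv ℝ φ y (x - y) ∂ν =
      (∫ y, fderiv ℝ φ y x ∂ν) - ∫ y, fderiv ℝ φ y y ∂ν := by
    simp only [map_sub, integral_sub hφx hφid]
  rw [hL, hsub, integral_const, probReal_univ, one_smul]
  abel

end AveragedTaylor

section AveragedTaylorEstimates

lemma enorm_sub_le_ofReal_diam {E : Type*} [SeminormedAddCommGroup E] {V : Set E}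
    (hV : Bornology.IsBounded V) {x y : E} (hx : x ∈ V) (hy : y ∈ V) :
    ‖x - y‖ₑ ≤ ENNReal.ofReal (diam V) := by
  rw [← edist_eq_enorm_sub, edist_dist]
  exact ENNReal.ofReal_le_ofReal (dist_le_diam_of_mem hV hx hy)

variable {E F : Type*} [NormedAddCommGroup E] [NormedSpace ℝ E] [FiniteDimensional ℝ E]
  [MeasurableSpace E] [BorelSpace E] {μ : Measure E} [μ.IsAddHaarMeasure]
  [NormedAddCommGroup F] {B V : Set E}

lemma integrable_cond_of_continuous {f : E → F} (hf : Continuous f) (hB : Bornology.IsBounded B)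
    (hμB : μ B ≠ 0) : Integrable f μ[|B] := by
  have hclosure : IntegrableOn f (closure B) μ :=
    hf.continuousOn.integrableOn_compact hB.isCompact_closure
  exact (hclosure.mono_set subset_closure).smul_measure (ENNReal.inv_ne_top.2 hμB)

variable [NormedSpace ℝ F] [CompleteSpace F] {φ : E → F} {p : ℝ≥0}

lemma enorm_sub_averagedTaylor_le (hV : MeasurableSet V) (hB : MeasurableSet B) (hBV : B ⊆ V)
    (hVb : Bornology.IsBounded V) (hμB : μ B ≠ 0) (hstar : ∀ y ∈ B, StarConvex ℝ y V)
    (hp : 1 ≤ p) (hdim : finrank ℝ E < 2 * p) (hφ : ContDiff ℝ 2 φ) {x : E} (hx : x ∈ V) :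
    ‖φ x - averagedTaylor μ[|B] φ x‖ₑ ≤
      ENNReal.ofReal (diam V) ^ 2 * (ENNReal.ofReal (2 - finrank ℝ E / p)⁻¹ *
        ((μ B)⁻¹ ^ (1 / p : ℝ) * eLpNorm (iteratedFDeriv ℝ 2 φ) p (μ.restrict V))) := by
  have hBb := hVb.subset hBV
  have := cond_isProbabilityMeasure_of_finite hμB hBb.measure_lt_top.ne
  have hφ' : Continuous (fderiv ℝ φ) := hφ.continuous_fderiv (by norm_num)
  have hφ'' : Continuous (iteratedFDeriv ℝ 2 φ) := hφ.continuous_iteratedFDeriv le_rfl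
  rw [sub_averagedTaylor (integrable_cond_of_continuous hφ.continuous hBb hμB)
    (integrable_cond_of_continuous hφ' hBb hμB)
    (integrable_cond_of_continuous (by fun_prop) hBb hμB), ← eLpNorm_enorm (iteratedFDeriv ℝ 2 φ)]
  calc ‖∫ y, (φ x - (φ y + fderiv ℝ φ y (x - y))) ∂μ[|B]‖ₑ
      ≤ ∫⁻ y, ‖φ x - (φ y + fderiv ℝ φ y (x - y))‖ₑ ∂μ[|B] := enorm_integral_le_lintegral_enorm _
    _ ≤ ∫⁻ y, ENNReal.ofReal (diam V) ^ 2 * (∫⁻ s in Ioo (0 : ℝ) 1,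
          ENNReal.ofReal (1 - s) * ‖iteratedFDeriv ℝ 2 φ (lineMap y x s)‖ₑ) ∂μ[|B] := by
        refine lintegral_mono_ae ?_
        filter_upwards [ae_cond_mem hB] with y hy
        refine (enorm_sub_add_fderiv_le hφ x y).trans ?_
        gcongr
        exact enorm_sub_le_ofReal_diam hVb hx (hBV hy)
    _ ≤ _ := by
        rw [lintegral_const_mul' _ _ (by finiteness)]
        gcongr
        exact lintegral_cond_lintegral_one_sub_mul_comp_lineMap_le hV hstar hp hdim
          hφ''.enorm.measurable hx

lemma eLpNorm_fderiv_sub_averagedTaylor_le (hV : MeasurableSet V) (hB : MeasurableSet B)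
    (hBV : B ⊆ V) (hVb : Bornology.IsBounded V) (hμB : μ B ≠ 0)
    (hstar : ∀ y ∈ B, StarConvex ℝ y V) (hp : 1 ≤ p) (hφ : ContDiff ℝ 2 φ) :
    eLpNorm (fun x ↦ fderiv ℝ φ x - (averagedTaylor μ[|B] φ).contLinear) p (μ.restrict V) ≤
      ENNReal.ofReal (diam V) * ((2 ^ finrank ℝ E * ((μ B)⁻¹ * μ V)) ^ (1 / p : ℝ) *
        eLpNorm (iteratedFDeriv ℝ 2 φ) p (μ.restrict V)) := by
  have hBb := hVb.subset hBV
  have := cond_isProbabilityMeasure_of_finite hμB hBb.measure_lt_top.ne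
  have hφ' : Continuous (fderiv ℝ φ) := hφ.continuous_fderiv (by norm_num)
  have hφ'' : Continuous (iteratedFDeriv ℝ 2 φ) := hφ.continuous_iteratedFDeriv le_rfl
  have hpointwise : ∀ x ∈ V, ‖fderiv ℝ φ x - (averagedTaylor μ[|B] φ).contLinear‖ₑ ≤
      ENNReal.ofReal (diam V) *
        ∫⁻ y, (∫⁻ s in Ioo (0 : ℝ) 1, ‖iteratedFDeriv ℝ 2 φ (lineMap y x s)‖ₑ) ∂μ[|B] := by
    intro x hx
    rw [fderiv_sub_averagedTaylor (integrable_cond_of_continuous hφ' hBb hμB),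
      ← lintegral_const_mul' _ _ (by finiteness)]
    refine (enorm_integral_le_lintegral_enorm _).trans (lintegral_mono_ae ?_)
    filter_upwards [ae_cond_mem hB] with y hy
    refine (enorm_fderiv_sub_fderiv_le hφ x y).trans ?_
    gcongr
    exact enorm_sub_le_ofReal_diam hVb hx (hBV hy)
  rw [← eLpNorm_enorm (iteratedFDeriv ℝ 2 φ)]
  grw [← eLpNorm_lintegral_cond_lintegral_comp_lineMap_le hB hV hBV hstar hp hφ''.enorm.measurable]
  refine eLpNorm_le_mul_eLpNorm_of_ae_le_mul' ((ae_restrict_iff' hV).2 (.of_forall ?_)) p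
  simpa only [enorm_eq_self, ENNReal.ofReal] using hpointwise

end AveragedTaylorEstimates

section NormEstimates

variable {E F : Type*} [NormedAddCommGroup E] [NormedSpace ℝ E] [FiniteDimensional ℝ E]
  [MeasurableSpace E] [BorelSpace E] {μ : Measure E} [μ.IsAddHaarMeasure]
  [NormedAddCommGroup F] {B V : Set E}

lemma measureReal_le_mul_measureReal_ball (hV : Bornology.IsBounded V) {z : E} {r : ℝ} (hr : 0 < r)
    (hz : z ∈ V) {a : ℝ} (ha : 0 ≤ a) (hdiam : diam V ≤ a * r) :
    μ.real V ≤ a ^ finrank ℝ E * μ.real (ball z r) := by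
  have hsub : V ⊆ closedBall z (a * r) := fun x hx ↦ (dist_le_diam_of_mem hV hx hz).trans hdiam
  calc μ.real V ≤ μ.real (closedBall z (a * r)) :=
        measureReal_mono hsub measure_closedBall_lt_top.ne
    _ = a ^ finrank ℝ E * μ.real (ball z r) := by
        rw [Measure.addHaar_real_closedBall μ z (by positivity),
          measureReal_def μ (ball z r), Measure.addHaar_ball_of_pos μ z hr, ENNReal.toReal_mul,
          ENNReal.toReal_ofReal (by positivity), mul_pow, mul_assoc, measureReal_def]

lemma memLp_restrict_of_continuous {f : E → F} (hf : Continuous f) (hV : Bornology.IsBounded V)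
    (p : ℝ≥0∞) : MemLp f p (μ.restrict V) := by
  have hcompact : IsCompact (closure V) := hV.isCompact_closure
  obtain ⟨C, hC⟩ := hcompact.exists_bound_of_continuousOn hf.continuousOn
  have : IsFiniteMeasure (μ.restrict (closure V)) := ⟨by simpa using hcompact.measure_lt_top⟩
  refine (MemLp.of_bound hf.aestronglyMeasurable C ?_).mono_measure
    (Measure.restrict_mono subset_closure le_rfl)
  filter_upwards [ae_restrict_mem isClosed_closure.measurableSet] using hC

lemma inv_rpow_le_mul_rpow_neg {a b κ q : ℝ} (ha : 0 < a) (hb : 0 < b) (hab : a ≤ κ * b)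
    (hq : 0 ≤ q) : b⁻¹ ^ q ≤ κ ^ q * a ^ (-q) := by
  have hκ : 0 < κ := pos_of_mul_pos_left (ha.trans_le hab) hb.le
  rw [Real.rpow_neg ha.le, ← Real.inv_rpow ha.le, ← Real.mul_rpow hκ.le (inv_nonneg.2 ha.le)]
  gcongr
  rwa [← div_eq_mul_inv, le_div_iff₀ ha, inv_mul_le_iff₀ hb, mul_comm]

variable [NormedSpace ℝ F] [CompleteSpace F] {φ : E → F} {p : ℝ≥0} {κ : ℝ}

lemma norm_sub_averagedTaylor_le (hV : MeasurableSet V) (hB : MeasurableSet B) (hBV : B ⊆ V)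
    (hVb : Bornology.IsBounded V) (hμB : μ B ≠ 0) (hκ : μ.real V ≤ κ * μ.real B)
    (hstar : ∀ y ∈ B, StarConvex ℝ y V) (hp : 1 ≤ p) (hdim : finrank ℝ E < 2 * p)
    (hφ : ContDiff ℝ 2 φ) {x : E} (hx : x ∈ closure V) :
    ‖φ x - averagedTaylor μ[|B] φ x‖ ≤
      (2 - finrank ℝ E / p : ℝ)⁻¹ * κ ^ (1 / p : ℝ) * diam V ^ 2 * μ.real V ^ (-(1 / p) : ℝ) *
        lpNorm (iteratedFDeriv ℝ 2 φ) p (μ.restrict V) := by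
  have hexp : 0 < 2 - finrank ℝ E / (p : ℝ) := two_sub_div_pos hp hdim
  have hcont : Continuous fun x ↦ ‖φ x - averagedTaylor μ[|B] φ x‖ := by
    have := hφ.continuous
    fun_prop
  have hφ'' := memLp_restrict_of_continuous (μ := μ) (hφ.continuous_iteratedFDeriv le_rfl) hVb p
  have hB0 : 0 < μ.real B := ENNReal.toReal_pos hμB (hVb.subset hBV).measure_lt_top.ne
  have hV0 : 0 < μ.real V := hB0.trans_le (measureReal_mono hBV hVb.measure_lt_top.ne)
  refine closure_minimal (fun x hx ↦ ?_) (isClosed_le hcont continuous_const) hx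
  have hle := enorm_sub_averagedTaylor_le hV hB hBV hVb hμB hstar hp hdim hφ hx
  calc ‖φ x - averagedTaylor μ[|B] φ x‖
      ≤ diam V ^ 2 * ((2 - finrank ℝ E / p : ℝ)⁻¹ * ((μ.real B)⁻¹ ^ (1 / p : ℝ) *
          lpNorm (iteratedFDeriv ℝ 2 φ) p (μ.restrict V))) := by
        simpa [toReal_eLpNorm hφ''.1, ENNReal.toReal_ofReal, diam_nonneg, hexp.le,
          ← ENNReal.toReal_rpow, measureReal_def] using ENNReal.toReal_mono (by finiteness) hle
    _ ≤ diam V ^ 2 * ((2 - finrank ℝ E / p : ℝ)⁻¹ *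
          (κ ^ (1 / p : ℝ) * μ.real V ^ (-(1 / p) : ℝ) *
            lpNorm (iteratedFDeriv ℝ 2 φ) p (μ.restrict V))) := by
        gcongr
        · exact lpNorm_nonneg
        · exact inv_rpow_le_mul_rpow_neg hV0 hB0 hκ (by positivity)
    _ = _ := by ring

lemma lpNorm_fderiv_sub_averagedTaylor_le (hV : MeasurableSet V) (hB : MeasurableSet B)
    (hBV : B ⊆ V) (hVb : Bornology.IsBounded V) (hμB : μ B ≠ 0) (hκ : μ.real V ≤ κ * μ.real B)
    (hstar : ∀ y ∈ B, StarConvex ℝ y V) (hp : 1 ≤ p) (hφ : ContDiff ℝ 2 φ) :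
    lpNorm (fun x ↦ fderiv ℝ φ x - (averagedTaylor μ[|B] φ).contLinear) p (μ.restrict V) ≤
      (2 ^ finrank ℝ E * κ) ^ (1 / p : ℝ) * diam V *
        lpNorm (iteratedFDeriv ℝ 2 φ) p (μ.restrict V) := by
  have hdiff : Continuous fun x ↦ fderiv ℝ φ x - (averagedTaylor μ[|B] φ).contLinear :=
    (hφ.continuous_fderiv (by norm_num)).sub continuous_const
  have hφ'' := memLp_restrict_of_continuous (μ := μ) (hφ.continuous_iteratedFDeriv le_rfl) hVb p
  have hVtop : μ V ≠ ∞ := hVb.measure_lt_top.ne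
  have hB0 : 0 < μ.real B := ENNReal.toReal_pos hμB (hVb.subset hBV).measure_lt_top.ne
  have hle := eLpNorm_fderiv_sub_averagedTaylor_le hV hB hBV hVb hμB hstar hp hφ
  calc lpNorm (fun x ↦ fderiv ℝ φ x - (averagedTaylor μ[|B] φ).contLinear) p (μ.restrict V)
      ≤ diam V * ((2 ^ finrank ℝ E * ((μ.real B)⁻¹ * μ.real V)) ^ (1 / p : ℝ) *
          lpNorm (iteratedFDeriv ℝ 2 φ) p (μ.restrict V)) := by
        simpa [toReal_eLpNorm hφ''.1, toReal_eLpNorm hdiff.aestronglyMeasurable,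
          ENNReal.toReal_ofReal, diam_nonneg, ← ENNReal.toReal_rpow, measureReal_def]
          using ENNReal.toReal_mono (by finiteness) hle
    _ ≤ diam V * ((2 ^ finrank ℝ E * κ) ^ (1 / p : ℝ) *
          lpNorm (iteratedFDeriv ℝ 2 φ) p (μ.restrict V)) := by
        gcongr
        · exact lpNorm_nonneg
        · rwa [inv_mul_le_iff₀ hB0, mul_comm]
    _ = _ := by ring

end NormEstimates

theorem stmt4_general {E F : Type*} [NormedAddCommGroup E] [NormedSpace ℝ E]
    [FiniteDimensional ℝ E] [MeasurableSpace E] [BorelSpace E] (μ : Measure E)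
    [μ.IsAddHaarMeasure] [NormedAddCommGroup F] [NormedSpace ℝ F] [CompleteSpace F] {p : ℝ≥0}
    (hp : 1 ≤ p) (hdim : finrank ℝ E < 2 * p) {θ : ℝ} (hθ : 0 < θ) :
    ∃ C > 0, ∀ (V : Set E) (z : E) (r : ℝ), MeasurableSet V → Bornology.IsBounded V → 0 < r →
      ball z r ⊆ V → (∀ y ∈ ball z r, StarConvex ℝ y V) → diam V ≤ θ * diam (ball z r) →
      ∀ φ : E → F, ContDiff ℝ 2 φ → ∃ L : E →ᴬ[ℝ] F,
        (∀ x ∈ closure V, ‖φ x - L x‖ ≤ C * diam V ^ 2 * μ.real V ^ (-(1 / p) : ℝ) *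
          lpNorm (iteratedFDeriv ℝ 2 φ) p (μ.restrict V)) ∧
        lpNorm (fun x ↦ fderiv ℝ φ x - L.contLinear) p (μ.restrict V) ≤
          C * diam V * lpNorm (iteratedFDeriv ℝ 2 φ) p (μ.restrict V) := by
  set C₁ : ℝ := (2 - finrank ℝ E / (p : ℝ))⁻¹ * ((2 * θ) ^ finrank ℝ E) ^ (1 / p : ℝ)
  set C₂ : ℝ := (2 ^ finrank ℝ E * (2 * θ) ^ finrank ℝ E) ^ (1 / p : ℝ)
  have hC₁ : 0 < C₁ := mul_pos (inv_pos.2 (two_sub_div_pos hp hdim)) (by positivity)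
  have hC₂ : 0 < C₂ := by positivity
  refine ⟨C₁ + C₂, by positivity, fun V z r hV hVb hr hBV hstar hdiam φ hφ ↦ ?_⟩
  have hμB : μ (ball z r) ≠ 0 := (measure_ball_pos μ z hr).ne'
  have hvol : μ.real V ≤ (2 * θ) ^ finrank ℝ E * μ.real (ball z r) :=
    measureReal_le_mul_measureReal_ball hVb hr (hBV (mem_ball_self hr)) (by positivity) <| by
      nlinarith [diam_ball (x := z) hr.le]
  refine ⟨averagedTaylor μ[|ball z r] φ, fun x hx ↦ ?_, ?_⟩
  · refine (norm_sub_averagedTaylor_le hV measurableSet_ball hBV hVb hμB hvol hstar hp hdim hφ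
      hx).trans ?_
    gcongr
    · exact lpNorm_nonneg
    · exact le_add_of_nonneg_right hC₂.le
  · refine (lpNorm_fderiv_sub_averagedTaylor_le hV measurableSet_ball hBV hVb hμB hvol hstar hp
      hφ).trans ?_
    gcongr
    · exact lpNorm_nonneg
    · exact le_add_of_nonneg_left hC₁.le

section Euclidean

lemma lpNorm_two_eq_integral_rpow {α E : Type*} [MeasurableSpace α] {μ : Measure α}
    [NormedAddCommGroup E] {f : α → E} (hf : AEStronglyMeasurable f μ) :
    lpNorm f (2 : ℝ≥0) μ = (∫ x, ‖f x‖ ^ 2 ∂μ) ^ ((1 : ℝ) / 2) := by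
  simp only [lpNorm_nnreal_eq_integral_norm_rpow two_ne_zero hf, NNReal.coe_ofNat,
    Real.rpow_ofNat, one_div]

lemma lpNorm_iteratedFDeriv_two_le_H2norm {d : ℕ} {V : Set (EuclideanSpace ℝ (Fin d))}
    (hV : Bornology.IsBounded V) {φ : EuclideanSpace ℝ (Fin d) → ℝ} (hφ : ContDiff ℝ 2 φ) :
    lpNorm (iteratedFDeriv ℝ 2 φ) (2 : ℝ≥0) (volume.restrict V) ≤ H2norm V φ := by
  have hφ0 : Continuous φ := hφ.continuous
  have hφ' : Continuous (fderiv ℝ φ) := hφ.continuous_fderiv (by norm_num)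
  have hφ'' : Continuous (iteratedFDeriv ℝ 2 φ) := hφ.continuous_iteratedFDeriv le_rfl
  have hint {f : EuclideanSpace ℝ (Fin d) → ℝ} (hf : Continuous f) : IntegrableOn f V :=
    memLp_one_iff_integrable.1 (memLp_restrict_of_continuous hf hV 1)
  rw [lpNorm_two_eq_integral_rpow hφ''.aestronglyMeasurable, H2norm]
  refine Real.rpow_le_rpow (by positivity) ?_ (by positivity)
  exact integral_mono (hint (by fun_prop)) (hint (by fun_prop)) fun x ↦
    le_add_of_nonneg_left (by positivity)

lemma lpNorm_two_fderiv_sub_eq_integral_gradient_sub {H : Type*} [NormedAddCommGroup H]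
    [InnerProductSpace ℝ H] [CompleteSpace H] [MeasurableSpace H]
    {μ : Measure H} {f : H → ℝ} (hf : AEStronglyMeasurable (fderiv ℝ f) μ) (ℓ : StrongDual ℝ H) :
    lpNorm (fun x ↦ fderiv ℝ f x - ℓ) (2 : ℝ≥0) μ =
      (∫ x, ‖gradient f x - (InnerProductSpace.toDual ℝ H).symm ℓ‖ ^ 2 ∂μ) ^ ((1 : ℝ) / 2) := by
  rw [lpNorm_two_eq_integral_rpow (by fun_prop)]
  simp only [gradient, ← map_sub, LinearIsometryEquiv.norm_map]

end Euclidean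

/-- approximation of `H²` functions by affine functions. If `d ≤ 3` and
`V ⊂ ℝ^d` is bounded, open, star-shaped with respect to every point of a ball `B(z,r) ⊆ V`
with `diam(V)/diam(B) ≤ θ`, then there is `C = C(d, θ)` such that every
`φ ∈ H²(V) ∩ C(V̄)` admits an affine `L` with
`sup_{V̄} |φ − L| ≤ C diam(V)² |V|^{−1/2} ‖φ‖_{H²(V)}` and
`‖∇L − ∇φ‖_{L²(V)^d} ≤ C diam(V) ‖φ‖_{H²(V)}`. -/
theorem stmt4 (d : ℕ) (hd : d ≤ 3) (θ : ℝ) (hθ : 0 < θ) :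
    ∃ C > 0, ∀ (V : Set (EuclideanSpace ℝ (Fin d))) (z : EuclideanSpace ℝ (Fin d)) (r : ℝ),
      IsOpen V → Bornology.IsBounded V → 0 < r → ball z r ⊆ V →
      (∀ y ∈ ball z r, ∀ x ∈ V, segment ℝ y x ⊆ V) →
      diam V ≤ θ * diam (ball z r) →
      ∀ φ : EuclideanSpace ℝ (Fin d) → ℝ, ContDiff ℝ 2 φ →
      ∃ L : EuclideanSpace ℝ (Fin d) →ᵃ[ℝ] ℝ,
        (∀ x ∈ closure V,
          |φ x - L x| ≤ C * diam V ^ 2 * (volume V).toReal ^ (-(1 : ℝ) / 2) * H2norm V φ) ∧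
        (∫ x in V, ‖gradient φ x -
            (InnerProductSpace.toDual ℝ _).symm (LinearMap.toContinuousLinearMap L.linear)‖ ^ 2)
            ^ ((1 : ℝ) / 2) ≤ C * diam V * H2norm V φ := by
  have hdim : finrank ℝ (EuclideanSpace ℝ (Fin d)) < 2 * (2 : ℝ≥0) := by
    rw [finrank_euclideanSpace_fin]
    exact_mod_cast hd.trans_lt (by norm_num)
  obtain ⟨C, hC, hbound⟩ := stmt4_general (F := ℝ) (volume : Measure (EuclideanSpace ℝ (Fin d)))
    one_le_two hdim hθ
  refine ⟨C, hC, fun V z r hV hVb hr hBV hstar hdiam φ hφ ↦ ?_⟩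
  obtain ⟨L, hsup, hgrad⟩ := hbound V z r hV.measurableSet hVb hr hBV
    (fun y hy ↦ starConvex_iff_segment_subset.2 fun x hx ↦ hstar y hy x hx) hdiam φ hφ
  have hH2 := lpNorm_iteratedFDeriv_two_le_H2norm hVb hφ
  have hscale {a : ℝ} (ha : 0 ≤ a) := mul_le_mul_of_nonneg_left hH2 ha
  refine ⟨L.toAffineMap, fun x hx ↦ ?_, ?_⟩
  · rw [← Real.norm_eq_abs, neg_div]
    exact (hsup x hx).trans (hscale (by positivity))
  · have hφ' : Continuous (fderiv ℝ φ) := hφ.continuous_fderiv (by norm_num)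
    exact (lpNorm_two_fderiv_sub_eq_integral_gradient_sub hφ'.aestronglyMeasurable _).symm.trans_le
      (hgrad.trans (hscale (by positivity)))
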